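/- arXiv:1707.07629 — 2 statements merged into one kernel-verified Lean document; each statement's English description precedes it below -/
import Mathlib

section
/- Let A be an r×c integer matrix of rank r (r ≤ c) of the form [N O], where N is an r×r nonsingular lower triangular integer matrix and O is the zero block. Then there exists an r×r unimodular matrix U′ such that U′·A = [N′ O], where N′ is an r×r matrix in left Hermite normal form (lower triangular, positive diagonal entries, and 0 ≤ N′ i j < N′ j j for i > j). -/
open Matrix

/-- An `n × n` integer matrix is unimodular if its determinant is `1` or `-1`. -/
def Unimodular {n : ℕ} (U : Matrix (Fin n) (Fin n) ℤ) : Prop :=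
  U.det = 1 ∨ U.det = -1

/-- A square integer matrix is in left Hermite normal form: it is lower triangular,
its diagonal entries are positive, and each entry below the diagonal is nonnegative
and smaller than the diagonal entry of its column. -/
def LHNF {n : ℕ} (H : Matrix (Fin n) (Fin n) ℤ) : Prop :=
  (∀ i j, i < j → H i j = 0) ∧
  (∀ i, 0 < H i i) ∧
  (∀ i j, j < i → 0 ≤ H i j ∧ H i j < H j j)

/-!
Multiplying each row of `N` by the sign of its diagonal entry makes the diagonal positive. Row `i`
is then reduced by the earlier rows, taking the columns `j < i` in decreasing order: adding a
multiple of row `j` changes only the columns up to `j`, so a column is never disturbed after it has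
been reduced. These row operations compose to a lower triangular matrix with ones on the diagonal.
-/

theorem unimodular_iff_isUnit_det {n : ℕ} {U : Matrix (Fin n) (Fin n) ℤ} :
    Unimodular U ↔ IsUnit U.det :=
  Int.isUnit_iff.symm

theorem Unimodular.mul {n : ℕ} {U V : Matrix (Fin n) (Fin n) ℤ}
    (hU : Unimodular U) (hV : Unimodular V) : Unimodular (U * V) := by
  rw [unimodular_iff_isUnit_det] at *
  rw [det_mul]
  exact hU.mul hV

theorem unimodular_diagonal_sign {n : ℕ} {d : Fin n → ℤ} (hd : ∀ i, d i ≠ 0) :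
    Unimodular (diagonal fun i => (d i).sign) := by
  rw [unimodular_iff_isUnit_det, det_diagonal, IsUnit.prod_univ_iff]
  intro i
  rw [Int.isUnit_iff_natAbs_eq, Int.natAbs_sign_of_ne_zero (hd i)]

section LowerTriangular

variable {ι R : Type*} [Fintype ι] [LinearOrder ι]

theorem mul_apply_self_of_isLowerTriangular [NonUnitalNonAssocSemiring R] {M N : Matrix ι ι R}
    (hM : M.IsLowerTriangular) (hN : N.IsLowerTriangular) (i : ι) :
    (M * N) i i = M i i * N i i := by
  rw [mul_apply]
  refine Fintype.sum_eq_single i fun k hk => ?_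
  rcases hk.lt_or_gt with hki | hik
  · rw [hN hki, mul_zero]
  · rw [hM hik, zero_mul]

theorem det_ne_zero_iff_of_isLowerTriangular [CommRing R] [IsDomain R] {M : Matrix ι ι R}
    (hM : M.IsLowerTriangular) : M.det ≠ 0 ↔ ∀ i, M i i ≠ 0 := by
  simp only [det_of_isLowerTriangular M hM, Finset.prod_ne_zero_iff, Finset.mem_univ, true_imp_iff]

-- `S j` stands for a set of residues modulo the pivot `M j j`, such as `[0, M j j)` in `ℤ`.
theorem exists_add_vecMul_mem [Semiring R] {M : Matrix ι ι R} (hM : M.IsLowerTriangular)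
    {S : ι → Set R} (hS : ∀ j x, ∃ q, x + q * M j j ∈ S j) (s : Finset ι) (v : ι → R) :
    ∃ w : ι → R, (∀ j ∉ s, w j = 0) ∧ ∀ j ∈ s, (v + w ᵥ* M) j ∈ S j := by
  induction s using Finset.induction_on_max generalizing v with
  | empty => exact ⟨0, by simp⟩
  | insert a s hlt ih =>
    obtain ⟨q, hq⟩ := hS a (v a)
    obtain ⟨w, hw_supp, hw_mem⟩ := ih (v + q • M a)
    have hw_pivot : (w ᵥ* M) a = 0 := by
      refine Finset.sum_eq_zero fun j _ => show w j * M j a = 0 from ?_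
      by_cases hj : j ∈ s
      · rw [hM (hlt j hj), mul_zero]
      · rw [hw_supp j hj, zero_mul]
    have hadd : v + (Pi.single a q + w) ᵥ* M = v + q • M a + w ᵥ* M := by
      rw [add_vecMul, single_vecMul, add_assoc]
      rfl
    refine ⟨Pi.single a q + w, fun j hj => ?_, fun j hj => ?_⟩
    · rw [Finset.mem_insert, not_or] at hj
      rw [Pi.add_apply, Pi.single_eq_of_ne hj.1, hw_supp j hj.2, add_zero]
    · rw [hadd]
      rcases Finset.mem_insert.1 hj with rfl | hj
      · simpa only [Pi.add_apply, Pi.smul_apply, smul_eq_mul, hw_pivot, add_zero] using hq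
      · exact hw_mem j hj

theorem exists_isLowerTriangular_mul_mem [Semiring R] {M : Matrix ι ι R}
    (hM : M.IsLowerTriangular) {S : ι → Set R} (hS : ∀ j x, ∃ q, x + q * M j j ∈ S j) :
    ∃ U : Matrix ι ι R, U.IsLowerTriangular ∧ (∀ i, U i i = 1) ∧
      ∀ i j, j < i → (U * M) i j ∈ S j := by
  choose L hL_supp hL_mem using fun i => exists_add_vecMul_mem hM hS {j | j < i} (M i)
  have hL : ∀ i j, i ≤ j → L i j = 0 := fun i j hij => hL_supp i j (by simpa using hij)
  refine ⟨1 + of L, blockTriangular_one.add fun i j hij => hL i j (le_of_lt hij),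
    fun i => ?_, fun i j hji => ?_⟩
  · rw [Matrix.add_apply, one_apply_eq, of_apply, hL i i le_rfl, add_zero]
  · rw [Matrix.add_mul, Matrix.one_mul]
    exact hL_mem i j (by simpa using hji)

end LowerTriangular

theorem exists_unimodular_mul_lhnf_of_diag_pos {n : ℕ} {M : Matrix (Fin n) (Fin n) ℤ}
    (hM : M.IsLowerTriangular) (hpos : ∀ i, 0 < M i i) :
    ∃ U : Matrix (Fin n) (Fin n) ℤ, Unimodular U ∧ LHNF (U * M) := by
  have hmod : ∀ j x, ∃ q, x + q * M j j ∈ Set.Ico 0 (M j j) := fun j x => by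
    simpa only [smul_eq_mul, zero_add] using (existsUnique_add_zsmul_mem_Ico (hpos j) x 0).exists
  obtain ⟨U, hU, hU_diag, hU_mem⟩ := exists_isLowerTriangular_mul_mem hM hmod
  have hdiag : ∀ i, (U * M) i i = M i i := fun i => by
    rw [mul_apply_self_of_isLowerTriangular hU hM, hU_diag, one_mul]
  refine ⟨U, Or.inl ?_, fun i j hij => hU.mul hM hij, fun i => ?_, fun i j hji => ?_⟩
  · simp only [det_of_isLowerTriangular U hU, hU_diag, Finset.prod_const_one]
  · rw [hdiag]
    exact hpos i
  · rw [hdiag]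
    exact hU_mem i j hji

theorem exists_unimodular_mul_lhnf {n : ℕ} {N : Matrix (Fin n) (Fin n) ℤ}
    (hN : N.IsLowerTriangular) (hdet : N.det ≠ 0) :
    ∃ U : Matrix (Fin n) (Fin n) ℤ, Unimodular U ∧ LHNF (U * N) := by
  have hdiag : ∀ i, N i i ≠ 0 := (det_ne_zero_iff_of_isLowerTriangular hN).1 hdet
  set D : Matrix (Fin n) (Fin n) ℤ := diagonal fun i => (N i i).sign
  have hDN_pos : ∀ i, 0 < (D * N) i i := fun i => by
    rw [diagonal_mul, Int.sign_mul_self_eq_abs]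
    exact abs_pos.2 (hdiag i)
  obtain ⟨U, hU, hUDN⟩ :=
    exists_unimodular_mul_lhnf_of_diag_pos ((blockTriangular_diagonal _).mul hN) hDN_pos
  refine ⟨U * D, hU.mul (unimodular_diagonal_sign hdiag), ?_⟩
  rwa [Matrix.mul_assoc]

/-- If `A = [N O]` is an `r × (r+s)` matrix of rank `r`, where `N` is an `r × r`
nonsingular lower triangular matrix (so `A i j = 0` whenever `i < j`) and `O` is the
zero block, then there is an `r × r` unimodular matrix `U'` with `U' * A = [N' O]`
where `N'` is in left Hermite normal form. -/
theorem stmt_10 {r s : ℕ} (hr : 0 < r)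
    (A : Matrix (Fin r) (Fin (r + s)) ℤ) (hrank : A.rank = r)
    (htri : ∀ (i : Fin r) (j : Fin (r + s)), (i : ℕ) < (j : ℕ) → A i j = 0)
    (hN : ((A.submatrix id (Fin.castAdd s)).det ≠ 0)) :
    ∃ U' : Matrix (Fin r) (Fin r) ℤ, Unimodular U' ∧
      LHNF ((U' * A).submatrix id (Fin.castAdd s)) ∧
      ∀ (i : Fin r) (j : Fin (r + s)), r ≤ (j : ℕ) → (U' * A) i j = 0 := by
  have htri_N : (A.submatrix id (Fin.castAdd s)).IsLowerTriangular :=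
    fun i j hij => htri i (Fin.castAdd s j) hij
  obtain ⟨U, hU, hUN⟩ := exists_unimodular_mul_lhnf htri_N hN
  refine ⟨U, hU, hUN, fun i j hj => ?_⟩
  have hcol : ∀ k, A k j = 0 := fun k => htri k j (k.isLt.trans_le hj)
  simp only [mul_apply, hcol, mul_zero, Finset.sum_const_zero]
end

section
/- Let A be an r×n integer matrix of rank r with 0 < r < n, let g be the greatest divisor of A, and let d be a positive integer divisible by g. Set k = n − r. Then the number of L-A-equivalence classes of solutions of |det [A;X]| = d equals g^k multiplied by the number of k×k integer matrices in left Hermite normal form with determinant d/g. -/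
open Matrix

/-- The greatest divisor of an `r × c` integer matrix: the greatest common divisor of
the determinants of all `r × r` submatrices obtained by selecting `r` of the `c`
columns. -/
def greatestDivisor {r c : ℕ} (M : Matrix (Fin r) (Fin c) ℤ) : ℤ :=
  Finset.univ.gcd fun f : Fin r → Fin c => (M.submatrix id f).det

/-- The matrix `[A; X]` obtained by stacking `A` above `X`. -/
def stack {r k n : ℕ} (A : Matrix (Fin r) (Fin n) ℤ) (X : Matrix (Fin k) (Fin n) ℤ) :
    Matrix (Fin (r + k)) (Fin n) ℤ :=
  (Matrix.fromRows A X).submatrix finSumFinEquiv.symm id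

/-- `X` is a solution of `|det [A; X]| = d`. -/
def IsSolution {r k : ℕ} (A : Matrix (Fin r) (Fin (r + k)) ℤ) (d : ℤ)
    (X : Matrix (Fin k) (Fin (r + k)) ℤ) : Prop :=
  (stack A X).det = d ∨ (stack A X).det = -d

/-- Two solutions `X`, `X'` are L-A-equivalent if `[A; X] = U · [A; X']` for some
unimodular `U`. -/
def LAEquiv {r k : ℕ} (A : Matrix (Fin r) (Fin (r + k)) ℤ)
    (X X' : Matrix (Fin k) (Fin (r + k)) ℤ) : Prop :=
  ∃ U : Matrix (Fin (r + k)) (Fin (r + k)) ℤ, Unimodular U ∧ stack A X = U * stack A X'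

/-!
A unimodular column operation changes neither the greatest divisor nor the number of classes, and
it brings `A` to the shape `[L 0]` with `L` square, so that `g = |det L|`. Writing a solution as
`[Y Z]`, the equation becomes `|det Z| = d / g`, and L-A-equivalence identifies `(Y, Z)` with
`(R * L + S * Y, S * Z)` for all `R` and all unimodular `S`. Each class contains pairs with `Z` in
Hermite normal form; since that form is unique and `Z` is nonsingular, passing between two such
pairs forces `S = 1`. What remains of `Y` is the residue of each of its `k` rows modulo the row
lattice of `L`, which has index `g`, whence the factor `g ^ k`.
-/

section RowReduction

variable {R : Type*} [EuclideanDomain R]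

theorem exists_isUnit_mulVec_eq_single {ι : Type*} [Fintype ι] [DecidableEq ι]
    (v : ι → R) (p : ι) :
    ∃ S : Matrix ι ι R, IsUnit S ∧ ∃ g, S *ᵥ v = Pi.single p g := by
  by_cases hv : v = 0
  · exact ⟨1, isUnit_one, 0, by simp [hv]⟩
  -- A nonzero entry of minimal Euclidean size among all `S *ᵥ v` divides the other entries.
  let entries : Set R := {a | a ≠ 0 ∧ ∃ S : Matrix ι ι R, IsUnit S ∧ ∃ i, (S *ᵥ v) i = a}
  have hne : entries.Nonempty := by
    obtain ⟨i, hi⟩ := Function.ne_iff.mp hv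
    exact ⟨v i, hi, 1, isUnit_one, i, by rw [one_mulVec]⟩
  obtain ⟨a, ⟨ha, S, hS, i, hSi⟩, hmin⟩ := EuclideanDomain.r_wellFounded.has_min entries hne
  let c : ι → R := Function.update (fun j => -((S *ᵥ v) j / a)) i 0
  let T : Matrix ι ι R := 1 + vecMulVec c (Pi.single i 1)
  have hT : IsUnit T := by
    have hdet : T.det = 1 := by
      simp only [T]
      rw [vecMulVec_eq Unit, det_one_add_replicateCol_mul_replicateRow]
      simp [c]
    rw [isUnit_iff_isUnit_det, hdet]
    exact isUnit_one
  have hTv (j : ι) : ((T * S) *ᵥ v) j = (S *ᵥ v) j + c j * a := by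
    simp [T, ← mulVec_mulVec, add_mulVec, vecMulVec_mulVec, hSi, mul_comm]
  have hsingle : (T * S) *ᵥ v = Pi.single i a := by
    ext j
    rcases eq_or_ne j i with rfl | hji
    · simp [hTv, c, hSi]
    have hmod : ((T * S) *ᵥ v) j = (S *ᵥ v) j % a := by
      rw [hTv, EuclideanDomain.mod_eq_sub_mul_div]
      simp only [c, Function.update_of_ne hji]
      ring
    rw [Pi.single_eq_of_ne hji]
    by_contra h
    exact hmin _ ⟨h, T * S, hT.mul hS, j, rfl⟩ (hmod ▸ EuclideanDomain.mod_lt _ ha)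
  refine ⟨(Equiv.swap i p).permMatrix R * (T * S), ?_, a, ?_⟩
  · refine IsUnit.mul ?_ (hT.mul hS)
    rw [isUnit_iff_isUnit_det, det_permutation]
    exact (Equiv.Perm.sign (Equiv.swap i p)).isUnit.map (Int.castRingHom R)
  · rw [← mulVec_mulVec, hsingle, permMatrix_mulVec]
    ext j
    simp only [Function.comp_apply, Pi.single_apply, Equiv.swap_apply_eq_iff, Equiv.swap_apply_left]

theorem exists_isUnit_mul_apply_eq_zero_of_lt {m n : ℕ} (M : Matrix (Fin m) (Fin n) R) :
    ∃ S : Matrix (Fin m) (Fin m) R, IsUnit S ∧ ∀ i j, j.val < i.val → (S * M) i j = 0 := by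
  induction m generalizing n with
  | zero => exact ⟨1, isUnit_one, fun i => i.elim0⟩
  | succ m ih =>
    cases n with
    | zero => exact ⟨1, isUnit_one, fun _ j => j.elim0⟩
    | succ n =>
      obtain ⟨S, hS, g, hg⟩ := exists_isUnit_mulVec_eq_single (M.col 0) 0
      have hcol (i : Fin m) : (S * M) i.succ 0 = 0 :=
        (congrFun hg i.succ).trans (Pi.single_eq_of_ne i.succ_ne_zero g)
      obtain ⟨S', hS', htri⟩ := ih ((S * M).submatrix Fin.succ Fin.succ)
      let T : Matrix (Fin (m + 1)) (Fin (m + 1)) R :=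
        of (Fin.cons (Pi.single 0 1) fun i => Fin.cons 0 (S' i))
      have hT : IsUnit T := by
        have hdet : T.det = S'.det := by
          have hrow : T 0 = Pi.single 0 1 := rfl
          have hminor : T.submatrix Fin.succ Fin.succ = S' := rfl
          simp [det_succ_row_zero, Fin.sum_univ_succ, hrow, hminor]
        rwa [isUnit_iff_isUnit_det, hdet, ← isUnit_iff_isUnit_det]
      have hTSM (i : Fin m) (j : Fin (n + 1)) :
          (T * (S * M)) i.succ j = ∑ l, S' i l * (S * M) l.succ j := by
        simp [T, mul_apply (M := T), Fin.sum_univ_succ]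
      refine ⟨T * S, hT.mul hS, fun i j hji => ?_⟩
      rw [Matrix.mul_assoc]
      obtain ⟨i, rfl⟩ := Fin.exists_succ_eq.mpr (fun h : i = 0 => by simp [h] at hji)
      rw [hTSM]
      cases j using Fin.cases with
      | zero => simp only [hcol, mul_zero, Finset.sum_const_zero]
      | succ j => exact htri i j (by simpa using hji)

theorem exists_isUnit_mul_isLowerTriangular {n : ℕ} (M : Matrix (Fin n) (Fin n) R) :
    ∃ S : Matrix (Fin n) (Fin n) R, IsUnit S ∧ (S * M).IsLowerTriangular := by
  let e : Fin n ≃ Fin n := Fin.revPerm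
  obtain ⟨S, hS, htri⟩ := exists_isUnit_mul_apply_eq_zero_of_lt (M.submatrix e e)
  have hrev : S.submatrix e e * M = (S * M.submatrix e e).submatrix e e := by
    rw [← submatrix_mul_equiv _ _ e e e, submatrix_submatrix]
    congr 1
    ext i j
    simp [e]
  refine ⟨S.submatrix e e, (isUnit_submatrix_equiv e e).mpr hS, fun i j hij => ?_⟩
  rw [hrev]
  exact htri _ _ (Fin.rev_lt_rev.mpr hij)

end RowReduction

section LowerTriangular

variable {ι R : Type*} [Fintype ι] [LinearOrder ι]

theorem vecMul_apply_eq_mul_diag [NonUnitalNonAssocSemiring R] {H : Matrix ι ι R}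
    (hH : H.IsLowerTriangular) {c : ι → R} {j : ι} (hc : ∀ l, j < l → c l = 0) :
    (c ᵥ* H) j = c j * H j j := by
  change ∑ l, c l * H l j = _
  refine Finset.sum_eq_single j (fun l _ hl => ?_) (by simp)
  rcases hl.lt_or_gt with h | h
  · rw [hH h, mul_zero]
  · rw [hc l h, zero_mul]

theorem isLowerTriangular_of_mul [NonUnitalNonAssocSemiring R] [NoZeroDivisors R]
    {S H : Matrix ι ι R} (hH : H.IsLowerTriangular) (hdiag : ∀ i, H i i ≠ 0)
    (hSH : (S * H).IsLowerTriangular) : S.IsLowerTriangular := by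
  intro i j hij
  induction j using WellFoundedGT.induction with
  | ind j ih =>
    have h : (S i ᵥ* H) j = 0 := hSH hij
    rw [vecMul_apply_eq_mul_diag hH fun l hl => ih l hl (lt_trans hl hij)] at h
    exact (mul_eq_zero.mp h).resolve_right (hdiag j)

theorem exists_add_vecMul_mem_Ico {H : Matrix ι ι ℤ} (hH : H.IsLowerTriangular)
    (hpos : ∀ i, 0 < H i i) (s : Finset ι) (v : ι → ℤ) :
    ∃ c : ι → ℤ, (∀ j ∉ s, c j = 0) ∧ ∀ j ∈ s, (v + c ᵥ* H) j ∈ Set.Ico 0 (H j j) := by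
  induction s using Finset.induction_on_max generalizing v with
  | empty => exact ⟨0, by simp⟩
  | insert a s hs ih =>
    let q : ι → ℤ := Pi.single a (-(v a / H a a))
    obtain ⟨c, hc, hmem⟩ := ih (v + q ᵥ* H)
    have has : a ∉ s := fun h => (hs a h).false
    refine ⟨q + c, fun j hj => ?_, fun j hj => ?_⟩
    · rw [Finset.mem_insert, not_or] at hj
      simp [q, hj.1, hc j hj.2]
    rw [add_vecMul, ← add_assoc]
    rcases Finset.mem_insert.mp hj with rfl | hj
    · have hcH : (c ᵥ* H) j = 0 := by
        rw [vecMul_apply_eq_mul_diag hH fun l hl => hc l fun h => (hs l h).asymm hl, hc j has,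
          zero_mul]
      have hmod : (v + q ᵥ* H + c ᵥ* H) j = v j % H j j := by
        have hqH : (q ᵥ* H) j = -(v j / H j j) * H j j := by simp [q]
        rw [Pi.add_apply, Pi.add_apply, hcH, hqH, Int.emod_def]
        ring
      rw [hmod]
      exact ⟨Int.emod_nonneg _ (hpos j).ne', Int.emod_lt_of_pos _ (hpos j)⟩
    · exact hmem j hj

theorem eq_zero_of_abs_vecMul_lt {H : Matrix ι ι ℤ} (hH : H.IsLowerTriangular) {c : ι → ℤ}
    (hc : ∀ j, |(c ᵥ* H) j| < H j j) : c = 0 := by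
  ext j
  induction j using WellFoundedGT.induction with
  | ind j ih =>
    have h := hc j
    have hpos : 0 < H j j := (abs_nonneg _).trans_lt h
    rw [vecMul_apply_eq_mul_diag hH ih, abs_mul, abs_of_pos hpos] at h
    exact Int.abs_lt_one_iff.mp (by nlinarith)

end LowerTriangular

section HermiteNormalForm

variable {n : ℕ} {H M S : Matrix (Fin n) (Fin n) ℤ}

theorem LHNF.isLowerTriangular (hH : LHNF H) : H.IsLowerTriangular :=
  fun i j hij => hH.1 i j hij

theorem LHNF.det_pos (hH : LHNF H) : 0 < H.det := by
  rw [det_of_isLowerTriangular H hH.isLowerTriangular]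
  exact Finset.prod_pos fun i _ => hH.2.1 i

theorem LHNF.eq_one_of_isUnit (hH : LHNF H) (hS : IsUnit S) (hSH : LHNF (S * H)) : S = 1 := by
  have hlow : S.IsLowerTriangular := isLowerTriangular_of_mul hH.isLowerTriangular
    (fun i => (hH.2.1 i).ne') hSH.isLowerTriangular
  have hdiag (i : Fin n) : (S * H) i i = S i i * H i i :=
    vecMul_apply_eq_mul_diag (c := S i) hH.isLowerTriangular fun _ hl => hlow hl
  have hone (i : Fin n) : S i i = 1 := by
    rw [isUnit_iff_isUnit_det, det_of_isLowerTriangular S hlow, IsUnit.prod_univ_iff] at hS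
    have hpos : 0 < S i i := pos_of_mul_pos_left (hdiag i ▸ hSH.2.1 i) (hH.2.1 i).le
    exact (Int.isUnit_iff.mp (hS i)).resolve_right (by lia)
  rw [← sub_eq_zero]
  refine funext fun i => ?_
  refine eq_zero_of_abs_vecMul_lt hH.isLowerTriangular fun j => ?_
  have hrow : ((S - 1) i ᵥ* H) j = (S * H) i j - H i j := by
    change ((S - 1) * H) i j = _
    rw [Matrix.sub_mul, Matrix.one_mul, Matrix.sub_apply]
  have hj : (S * H) j j = H j j := by rw [hdiag, hone, one_mul]
  rw [hrow, abs_lt]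
  have hHj := hH.2.1 j
  rcases lt_trichotomy i j with hij | rfl | hij
  · have h := hH.1 i j hij
    have h' := hSH.1 i j hij
    lia
  · lia
  · have h := hH.2.2 i j hij
    have h' := hSH.2.2 i j hij
    lia

theorem exists_isUnit_mul_isLowerTriangular_pos (hM : M.det ≠ 0) :
    ∃ S : Matrix (Fin n) (Fin n) ℤ,
      IsUnit S ∧ (S * M).IsLowerTriangular ∧ ∀ i, 0 < (S * M) i i := by
  obtain ⟨S, hS, hlow⟩ := exists_isUnit_mul_isLowerTriangular M
  have hdiag (i : Fin n) : (S * M) i i ≠ 0 := by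
    have hdet : (S * M).det ≠ 0 := by
      rw [det_mul]
      exact mul_ne_zero ((isUnit_iff_isUnit_det S).mp hS).ne_zero hM
    rw [det_of_isLowerTriangular _ hlow, Finset.prod_ne_zero_iff] at hdet
    exact hdet i (Finset.mem_univ i)
  let D : Matrix (Fin n) (Fin n) ℤ := diagonal fun i => ((S * M) i i).sign
  have hD : IsUnit D := by
    rw [isUnit_diagonal, Pi.isUnit_iff]
    exact fun i => Int.isUnit_iff_natAbs_eq.mpr (Int.natAbs_sign_of_ne_zero (hdiag i))
  refine ⟨D * S, hD.mul hS, fun i j hij => ?_, fun i => ?_⟩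
  · rw [Matrix.mul_assoc, diagonal_mul, hlow hij, mul_zero]
  · rw [Matrix.mul_assoc, diagonal_mul, Int.sign_mul_self_eq_abs]
    exact abs_pos.mpr (hdiag i)

theorem exists_isUnit_mul_LHNF_of_isLowerTriangular (hH : H.IsLowerTriangular)
    (hpos : ∀ i, 0 < H i i) :
    ∃ S : Matrix (Fin n) (Fin n) ℤ, IsUnit S ∧ LHNF (S * H) := by
  choose C hC hmem using fun i => exists_add_vecMul_mem_Ico hH hpos (Finset.Iio i) (H i)
  simp only [Finset.mem_Iio, not_lt] at hC hmem
  let S : Matrix (Fin n) (Fin n) ℤ := 1 + of C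
  have hS : IsUnit S := by
    have hlow : S.IsLowerTriangular := fun i j hij => by
      simp [S, one_apply_ne (OrderDual.toDual_lt_toDual.mp hij).ne,
        hC i j (OrderDual.toDual_lt_toDual.mp hij).le]
    rw [isUnit_iff_isUnit_det, det_of_isLowerTriangular S hlow]
    simp [S, hC]
  have hrow (i j : Fin n) : (S * H) i j = (H i + C i ᵥ* H) j := by
    rw [Matrix.add_mul, Matrix.one_mul]
    rfl
  have hkeep {i j : Fin n} (hij : i ≤ j) : (S * H) i j = H i j := by
    rw [hrow, Pi.add_apply, vecMul_apply_eq_mul_diag hH fun l hl => hC i l (hij.trans hl.le),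
      hC i j hij, zero_mul, add_zero]
  refine ⟨S, hS, fun i j hij => ?_, fun i => ?_, fun i j hij => ?_⟩
  · rw [hkeep hij.le, hH hij]
  · rw [hkeep le_rfl]
    exact hpos i
  · rw [hkeep le_rfl, hrow]
    exact hmem i j hij

theorem exists_isUnit_mul_LHNF (hM : M.det ≠ 0) :
    ∃ S : Matrix (Fin n) (Fin n) ℤ, IsUnit S ∧ LHNF (S * M) := by
  obtain ⟨S, hS, hlow, hpos⟩ := exists_isUnit_mul_isLowerTriangular_pos hM
  obtain ⟨T, hT, hTSM⟩ := exists_isUnit_mul_LHNF_of_isLowerTriangular hlow hpos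
  exact ⟨T * S, hT.mul hS, by rwa [Matrix.mul_assoc]⟩

end HermiteNormalForm

section Minors

theorem det_mul_eq_sum_prod_mul_det_submatrix {m n R : Type*} [Fintype m] [DecidableEq m]
    [Fintype n] [CommRing R] (B : Matrix m n R) (C : Matrix n m R) :
    (B * C).det = ∑ p : m → n, (∏ i, C (p i) i) * (B.submatrix id p).det := by
  classical
  simp only [det_apply', mul_apply, Finset.prod_univ_sum, Finset.mul_sum,
    Fintype.piFinset_univ, submatrix_apply, id_eq]
  rw [Finset.sum_comm]
  refine Finset.sum_congr rfl fun p _ => Finset.sum_congr rfl fun σ _ => ?_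
  rw [Finset.prod_mul_distrib]
  ring

variable {r n : ℕ}

theorem greatestDivisor_nonneg (A : Matrix (Fin r) (Fin n) ℤ) : 0 ≤ greatestDivisor A :=
  Int.nonneg_of_normalize_eq_self Finset.normalize_gcd

theorem greatestDivisor_dvd_det_mul (A : Matrix (Fin r) (Fin n) ℤ) (C : Matrix (Fin n) (Fin r) ℤ) :
    greatestDivisor A ∣ (A * C).det := by
  rw [det_mul_eq_sum_prod_mul_det_submatrix]
  exact Finset.dvd_sum fun p _ => (Finset.gcd_dvd (Finset.mem_univ p)).mul_left _

theorem det_dvd_greatestDivisor_mul (L : Matrix (Fin r) (Fin r) ℤ)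
    (B : Matrix (Fin r) (Fin n) ℤ) : L.det ∣ greatestDivisor (L * B) := by
  refine Finset.dvd_gcd fun p _ => ?_
  have hsub : (L * B).submatrix id p = L * B.submatrix id p := rfl
  rw [hsub, det_mul]
  exact dvd_mul_right _ _

end Minors

/-- The matrix `[B C]` obtained by placing `B` to the left of `C`, with columns indexed by
`Fin (r + k)` as in `stack`. -/
def juxtapose {m : Type*} {r k : ℕ} (B : Matrix m (Fin r) ℤ) (C : Matrix m (Fin k) ℤ) :
    Matrix m (Fin (r + k)) ℤ :=
  (fromCols B C).submatrix id finSumFinEquiv.symm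

section Juxtapose

variable {m : Type*} {r k : ℕ}

theorem exists_eq_juxtapose (X : Matrix m (Fin (r + k)) ℤ) : ∃ Y Z, X = juxtapose Y Z :=
  ⟨X.submatrix id (Fin.castAdd k), X.submatrix id (Fin.natAdd r), by
    ext i j
    cases j using Fin.addCases <;> simp [juxtapose]⟩

theorem juxtapose_zero_mul (L : Matrix m (Fin r) ℤ) {n : Type*} (W : Matrix (Fin (r + k)) n ℤ) :
    juxtapose L (0 : Matrix m (Fin k) ℤ) * W = L * W.submatrix (Fin.castAdd k) id := by
  ext i j
  simp [juxtapose, mul_apply, Fin.sum_univ_add]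

theorem exists_isUnit_mul_eq_juxtapose_zero (A : Matrix (Fin r) (Fin (r + k)) ℤ) :
    ∃ (V : Matrix (Fin (r + k)) (Fin (r + k)) ℤ) (L : Matrix (Fin r) (Fin r) ℤ),
      IsUnit V ∧ A * V = juxtapose L 0 := by
  obtain ⟨S, hS, htri⟩ := exists_isUnit_mul_apply_eq_zero_of_lt Aᵀ
  refine ⟨Sᵀ, (A * Sᵀ).submatrix id (Fin.castAdd k), (isUnit_transpose S).mpr hS, ?_⟩
  ext i j
  cases j using Fin.addCases with
  | left j => simp [juxtapose]
  | right j =>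
    have h : (A * Sᵀ)ᵀ (Fin.natAdd r j) i = 0 := by
      rw [transpose_mul, transpose_transpose]
      exact htri _ _ (i.isLt.trans_le (Nat.le_add_right r j))
    simpa [juxtapose] using h

theorem greatestDivisor_eq_abs_det {A : Matrix (Fin r) (Fin (r + k)) ℤ}
    {V : Matrix (Fin (r + k)) (Fin (r + k)) ℤ} {L : Matrix (Fin r) (Fin r) ℤ} (hV : IsUnit V)
    (hA : A * V = juxtapose L 0) : greatestDivisor A = |L.det| := by
  have hL : L = A * V.submatrix id (Fin.castAdd k) := by
    change L = (A * V).submatrix id (Fin.castAdd k)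
    rw [hA]
    ext i j
    simp [juxtapose]
  have hLW : A = L * V⁻¹.submatrix (Fin.castAdd k) id := by
    rw [← juxtapose_zero_mul, ← hA,
      mul_nonsing_inv_cancel_right _ _ ((isUnit_iff_isUnit_det V).mp hV)]
  refine Int.dvd_antisymm (greatestDivisor_nonneg A) (abs_nonneg _) ?_ ?_
  · rw [dvd_abs, hL]
    exact greatestDivisor_dvd_det_mul A _
  · rw [abs_dvd, hLW]
    exact det_dvd_greatestDivisor_mul L _

theorem stack_juxtapose (A : Matrix (Fin r) (Fin r) ℤ) (B : Matrix (Fin r) (Fin k) ℤ)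
    (C : Matrix (Fin k) (Fin r) ℤ) (D : Matrix (Fin k) (Fin k) ℤ) :
    stack (juxtapose A B) (juxtapose C D) =
      reindex finSumFinEquiv finSumFinEquiv (fromBlocks A B C D) := by
  ext i j
  cases i using Fin.addCases <;> cases j using Fin.addCases <;> simp [stack, juxtapose]

end Juxtapose

section Solutions

variable {r k : ℕ} {A : Matrix (Fin r) (Fin (r + k)) ℤ} {d : ℤ}

theorem unimodular_iff_isUnit {n : ℕ} {U : Matrix (Fin n) (Fin n) ℤ} :
    Unimodular U ↔ IsUnit U := by
  rw [isUnit_iff_isUnit_det, Int.isUnit_iff, Unimodular]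

theorem isSolution_iff_abs {X : Matrix (Fin k) (Fin (r + k)) ℤ} :
    IsSolution A d X ↔ |(stack A X).det| = |d| :=
  abs_eq_abs.symm

theorem laEquiv_equivalence (A : Matrix (Fin r) (Fin (r + k)) ℤ) : Equivalence (LAEquiv A) := by
  refine ⟨fun X => ⟨1, unimodular_iff_isUnit.mpr isUnit_one, (Matrix.one_mul _).symm⟩, ?_, ?_⟩
  · rintro X Y ⟨U, hU, h⟩
    rw [unimodular_iff_isUnit] at hU
    refine ⟨U⁻¹, unimodular_iff_isUnit.mpr (isUnit_nonsing_inv_iff.mpr hU), ?_⟩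
    rw [h, nonsing_inv_mul_cancel_left _ _ ((isUnit_iff_isUnit_det U).mp hU)]
  · rintro X Y Z ⟨U, hU, h⟩ ⟨T, hT, h'⟩
    rw [unimodular_iff_isUnit] at hU hT
    exact ⟨U * T, unimodular_iff_isUnit.mpr (hU.mul hT), by rw [h, h', Matrix.mul_assoc]⟩

/-- The set of L-A-equivalence classes of solutions of `|det [A; X]| = d`. -/
abbrev SolutionClass (A : Matrix (Fin r) (Fin (r + k)) ℤ) (d : ℤ) : Type :=
  Quot fun X Y : {X : Matrix (Fin k) (Fin (r + k)) ℤ // IsSolution A d X} => LAEquiv A X.1 Y.1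

theorem solutionClass_mk_eq_iff {X Y : {X : Matrix (Fin k) (Fin (r + k)) ℤ // IsSolution A d X}} :
    (Quot.mk _ X : SolutionClass A d) = Quot.mk _ Y ↔ LAEquiv A X.1 Y.1 :=
  ((laEquiv_equivalence A).comap Subtype.val).quot_mk_eq_iff X Y

theorem stack_mul (A : Matrix (Fin r) (Fin (r + k)) ℤ) (X : Matrix (Fin k) (Fin (r + k)) ℤ)
    (V : Matrix (Fin (r + k)) (Fin (r + k)) ℤ) : stack (A * V) (X * V) = stack A X * V := by
  rw [stack, ← fromRows_mul]
  rfl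

theorem isSolution_mul_right_iff {V : Matrix (Fin (r + k)) (Fin (r + k)) ℤ} (hV : IsUnit V)
    {X : Matrix (Fin k) (Fin (r + k)) ℤ} : IsSolution (A * V) d (X * V) ↔ IsSolution A d X := by
  rw [isUnit_iff_isUnit_det] at hV
  rw [isSolution_iff_abs, isSolution_iff_abs, stack_mul, det_mul, abs_mul,
    Int.isUnit_iff_abs_eq.mp hV, mul_one]

theorem laEquiv_mul_right_iff {V : Matrix (Fin (r + k)) (Fin (r + k)) ℤ} (hV : IsUnit V)
    {X Y : Matrix (Fin k) (Fin (r + k)) ℤ} : LAEquiv (A * V) (X * V) (Y * V) ↔ LAEquiv A X Y := by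
  simp only [LAEquiv, stack_mul, ← Matrix.mul_assoc, hV.mul_left_inj]

theorem card_solutionClass_mul_right {V : Matrix (Fin (r + k)) (Fin (r + k)) ℤ} (hV : IsUnit V) :
    Nat.card (SolutionClass (A * V) d) = Nat.card (SolutionClass A d) := by
  have hdet := (isUnit_iff_isUnit_det V).mp hV
  let mulV : Matrix (Fin k) (Fin (r + k)) ℤ ≃ Matrix (Fin k) (Fin (r + k)) ℤ :=
    { toFun := (· * V)
      invFun := (· * V⁻¹)
      left_inv := fun X => mul_nonsing_inv_cancel_right V X hdet
      right_inv := fun X => nonsing_inv_mul_cancel_right V X hdet }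
  exact (Nat.card_congr (Quot.congr
    (mulV.subtypeEquiv fun X => (isSolution_mul_right_iff hV (X := X)).symm)
    fun X Y => (laEquiv_mul_right_iff hV).symm)).symm

end Solutions

section RowLattice

variable {ι : Type*} [Fintype ι]

theorem card_quotient_span_rows [DecidableEq ι] {L : Matrix ι ι ℤ} (hL : L.det ≠ 0) :
    Nat.card ((ι → ℤ) ⧸ Submodule.span ℤ (Set.range L.row)) = L.det.natAbs := by
  have hrows : LinearIndependent ℤ L.row := (linearIndependent_rows_of_det_ne_zero hL)
  rw [← Submodule.natAbs_det_basis_change (Pi.basisFun ℤ ι) _ (Module.Basis.span hrows),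
    Pi.basisFun_det]
  exact congrArg (fun M : Matrix ι ι ℤ => M.det.natAbs) <| funext fun i =>
    congrArg Subtype.val (Module.Basis.span_apply hrows i)

theorem forall_quotient_mk_eq_iff_exists_mul_add {κ : Type*} {L : Matrix ι ι ℤ}
    {Y Y' : Matrix κ ι ℤ} :
    (∀ i, (Submodule.Quotient.mk (Y i) : (ι → ℤ) ⧸ Submodule.span ℤ (Set.range L.row)) =
      Submodule.Quotient.mk (Y' i)) ↔ ∃ R : Matrix κ ι ℤ, Y = R * L + Y' := by
  simp only [Submodule.Quotient.eq, ← range_vecMulLinear, LinearMap.mem_range,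
    vecMulLinear_apply, Classical.skolem, eq_sub_iff_add_eq]
  exact exists_congr fun R => ⟨fun h => funext fun i => (h i).symm, fun h i => (congrFun h i).symm⟩

end RowLattice

section BlockTriangularSolutions

variable {r k : ℕ} {L : Matrix (Fin r) (Fin r) ℤ} {Y Y' : Matrix (Fin k) (Fin r) ℤ}
  {Z Z' : Matrix (Fin k) (Fin k) ℤ} {e : ℤ}

theorem isSolution_juxtapose_iff (hL : L.det ≠ 0) :
    IsSolution (juxtapose L 0) (|L.det| * e) (juxtapose Y Z) ↔ |Z.det| = |e| := by
  rw [isSolution_iff_abs, stack_juxtapose, det_reindex_self, det_fromBlocks_zero₁₂, abs_mul,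
    abs_mul, abs_abs, mul_right_inj' (abs_ne_zero.mpr hL)]

theorem laEquiv_juxtapose_iff_exists_fromBlocks :
    LAEquiv (juxtapose L 0) (juxtapose Y Z) (juxtapose Y' Z') ↔
      ∃ P Q R S, IsUnit (fromBlocks P Q R S) ∧
        fromBlocks L 0 Y Z = fromBlocks P Q R S * fromBlocks L 0 Y' Z' := by
  have hreindex (U : Matrix (Fin r ⊕ Fin k) (Fin r ⊕ Fin k) ℤ) :
      (Unimodular (reindex finSumFinEquiv finSumFinEquiv U) ∧
        stack (juxtapose L 0) (juxtapose Y Z) = reindex finSumFinEquiv finSumFinEquiv U *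
          stack (juxtapose L 0) (juxtapose Y' Z')) ↔
      IsUnit U ∧ fromBlocks L 0 Y Z = U * fromBlocks L 0 Y' Z' := by
    rw [unimodular_iff_isUnit, stack_juxtapose, stack_juxtapose]
    simp only [reindex_apply, isUnit_submatrix_equiv, submatrix_mul_equiv]
    rw [← reindex_apply, ← reindex_apply, Equiv.apply_eq_iff_eq]
  rw [LAEquiv, (reindex finSumFinEquiv finSumFinEquiv).surjective.exists]
  simp only [hreindex]
  constructor
  · rintro ⟨U, hU⟩
    rw [← fromBlocks_toBlocks U] at hU
    exact ⟨_, _, _, _, hU⟩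
  · rintro ⟨P, Q, R, S, h⟩
    exact ⟨_, h⟩

theorem eq_zero_of_mul_eq_zero_of_det_ne_zero {m n R : Type*} [Fintype n] [DecidableEq n]
    [CommRing R] [NoZeroDivisors R] {M : Matrix n n R} (hM : M.det ≠ 0) {P : Matrix m n R}
    (h : P * M = 0) : P = 0 :=
  funext fun i => eq_zero_of_vecMul_eq_zero hM (congrFun h i)

theorem laEquiv_juxtapose_iff (hL : L.det ≠ 0) (hZ' : Z'.det ≠ 0) :
    LAEquiv (juxtapose L 0) (juxtapose Y Z) (juxtapose Y' Z') ↔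
      ∃ (R : Matrix (Fin k) (Fin r) ℤ) (S : Matrix (Fin k) (Fin k) ℤ),
        IsUnit S ∧ Y = R * L + S * Y' ∧ Z = S * Z' := by
  rw [laEquiv_juxtapose_iff_exists_fromBlocks]
  simp only [fromBlocks_multiply, fromBlocks_inj, Matrix.mul_zero, zero_add]
  constructor
  · rintro ⟨P, Q, R, S, hU, hPL, hQZ, hY, hZ⟩
    obtain rfl : Q = 0 := eq_zero_of_mul_eq_zero_of_det_ne_zero hZ' hQZ.symm
    obtain rfl : P = 1 := by
      refine sub_eq_zero.mp (eq_zero_of_mul_eq_zero_of_det_ne_zero hL ?_)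
      rw [Matrix.sub_mul, Matrix.one_mul, sub_eq_zero]
      rwa [Matrix.zero_mul, add_zero, eq_comm] at hPL
    exact ⟨R, S, by simpa [isUnit_iff_isUnit_det] using hU, hY, hZ⟩
  · rintro ⟨R, S, hS, hY, hZ⟩
    exact ⟨1, 0, R, S, by simpa [isUnit_iff_isUnit_det] using hS, by simp, by simp, hY, hZ⟩

theorem laEquiv_juxtapose_iff_of_LHNF (hL : L.det ≠ 0) (hZ : LHNF Z) (hZ' : LHNF Z') :
    LAEquiv (juxtapose L 0) (juxtapose Y Z) (juxtapose Y' Z') ↔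
      (∃ R : Matrix (Fin k) (Fin r) ℤ, Y = R * L + Y') ∧ Z = Z' := by
  rw [laEquiv_juxtapose_iff hL hZ'.det_pos.ne']
  constructor
  · rintro ⟨R, S, hS, hY, rfl⟩
    obtain rfl := hZ'.eq_one_of_isUnit hS hZ
    rw [Matrix.one_mul] at hY ⊢
    exact ⟨⟨R, hY⟩, rfl⟩
  · rintro ⟨⟨R, hY⟩, rfl⟩
    exact ⟨R, 1, isUnit_one, by rwa [Matrix.one_mul], (Matrix.one_mul _).symm⟩

theorem exists_LHNF_laEquiv (hL : L.det ≠ 0) (he : 0 < e) {X : Matrix (Fin k) (Fin (r + k)) ℤ}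
    (hX : IsSolution (juxtapose L 0) (|L.det| * e) X) :
    ∃ Y H, LHNF H ∧ H.det = e ∧ LAEquiv (juxtapose L 0) (juxtapose Y H) X := by
  obtain ⟨Y, Z, rfl⟩ := exists_eq_juxtapose X
  rw [isSolution_juxtapose_iff hL, abs_of_pos he] at hX
  have hZ : Z.det ≠ 0 := abs_pos.mp (hX ▸ he)
  obtain ⟨S, hS, hSZ⟩ := exists_isUnit_mul_LHNF hZ
  refine ⟨S * Y, S * Z, hSZ, ?_, (laEquiv_juxtapose_iff hL hZ).mpr ⟨0, S, hS, by simp, rfl⟩⟩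
  rw [← abs_of_pos hSZ.det_pos, det_mul, abs_mul,
    Int.isUnit_iff_abs_eq.mp ((isUnit_iff_isUnit_det S).mp hS), one_mul, hX]

theorem card_eq_card_of_surjective_of_eq_iff {α β γ : Type*} {f : α → β} {g : α → γ}
    (hf : f.Surjective) (hg : g.Surjective) (h : ∀ a a', f a = f a' ↔ g a = g a') :
    Nat.card β = Nat.card γ :=
  Nat.card_congr <| (Setoid.quotientKerEquivOfSurjective f hf).symm.trans <|
    (Quotient.congrRight h).trans (Setoid.quotientKerEquivOfSurjective g hg)

theorem card_solutionClass_juxtapose_zero (k : ℕ) (hL : L.det ≠ 0) (he : 0 < e) :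
    Nat.card (SolutionClass (k := k) (juxtapose L 0) (|L.det| * e)) =
      L.det.natAbs ^ k * Nat.card {H : Matrix (Fin k) (Fin k) ℤ // LHNF H ∧ H.det = e} := by
  let HNF := {H : Matrix (Fin k) (Fin k) ℤ // LHNF H ∧ H.det = e}
  let Residue := (Fin r → ℤ) ⧸ Submodule.span ℤ (Set.range L.row)
  let toClass (p : Matrix (Fin k) (Fin r) ℤ × HNF) :
      SolutionClass (k := k) (juxtapose L 0) (|L.det| * e) :=
    Quot.mk _ ⟨juxtapose p.1 p.2.1, (isSolution_juxtapose_iff hL).mpr (by rw [p.2.2.2])⟩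
  let toResidue (p : Matrix (Fin k) (Fin r) ℤ × HNF) : (Fin k → Residue) × HNF :=
    (fun i => Submodule.Quotient.mk (p.1 i), p.2)
  have hclass : toClass.Surjective := by
    rintro ⟨X, hX⟩
    obtain ⟨Y, H, hH, hdet, hYH⟩ := exists_LHNF_laEquiv hL he hX
    exact ⟨(Y, ⟨H, hH, hdet⟩), solutionClass_mk_eq_iff.mpr hYH⟩
  have hresidue : toResidue.Surjective := by
    rintro ⟨q, H⟩
    choose Y hY using fun i => Submodule.Quotient.mk_surjective _ (q i)
    exact ⟨(Y, H), Prod.ext (funext hY) rfl⟩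
  have hiff (p p') : toClass p = toClass p' ↔ toResidue p = toResidue p' := by
    rw [solutionClass_mk_eq_iff, laEquiv_juxtapose_iff_of_LHNF hL p.2.2.1 p'.2.2.1,
      ← forall_quotient_mk_eq_iff_exists_mul_add, Prod.ext_iff, funext_iff, Subtype.ext_iff]
  rw [card_eq_card_of_surjective_of_eq_iff hclass hresidue hiff, Nat.card_prod, Nat.card_fun,
    card_quotient_span_rows hL, Nat.card_fin]

end BlockTriangularSolutions

/-- With `g` the greatest divisor of `A` and `k = n − r`, the number of
L-A-equivalence classes of solutions of `|det [A; X]| = d` is `g ^ k` times the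
number of `k × k` integer matrices in left Hermite normal form with determinant
`d / g`. -/
theorem stmt_19 {r k : ℕ} (hr : 0 < r) (hk : 0 < k)
    (A : Matrix (Fin r) (Fin (r + k)) ℤ) (hrank : A.rank = r)
    (d : ℤ) (hd : 0 < d) (hdvd : greatestDivisor A ∣ d) :
    Nat.card (Quot fun (X Y : {X : Matrix (Fin k) (Fin (r + k)) ℤ // IsSolution A d X}) =>
        LAEquiv A X.1 Y.1) =
      (greatestDivisor A).toNat ^ k *
        Nat.card {H : Matrix (Fin k) (Fin k) ℤ // LHNF H ∧ H.det = d / greatestDivisor A} := by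
  obtain ⟨V, L, hV, hA⟩ := exists_isUnit_mul_eq_juxtapose_zero A
  rw [greatestDivisor_eq_abs_det hV hA] at hdvd ⊢
  obtain ⟨e, rfl⟩ := hdvd
  have hL : L.det ≠ 0 := abs_ne_zero.mp (left_ne_zero_of_mul hd.ne')
  have he : 0 < e := pos_of_mul_pos_right hd (abs_nonneg _)
  have hclasses := card_solutionClass_mul_right (A := A) (d := |L.det| * e) hV
  rw [hA, card_solutionClass_juxtapose_zero k hL he] at hclasses
  rw [← hclasses, Int.mul_ediv_cancel_left e (abs_ne_zero.mpr hL), Int.abs_eq_natAbs,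
    Int.toNat_natCast]
end
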